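/- For every t > 0 and all x, y > 0, the diffusion kernel K(t,x,y) satisfies the spatially varying diffusion equation in (t,x): ∂K/∂t (t,x,y) = x · ∂²K/∂x² (t,x,y) + (1/2) · ∂K/∂x (t,x,y). -/

import Mathlib

open Real

/-- The spatially varying diffusion kernel on `(0,∞)`:
`K(t,x,y) = (πty)^(−1/2) · exp(−(x+y)/t) · cosh(2√(xy)/t)`. -/
noncomputable def diffusionKernel (t x y : ℝ) : ℝ :=
  (Real.pi * t * y) ^ (-(1 : ℝ) / 2) * Real.exp (-(x + y) / t) *
    Real.cosh (2 * Real.sqrt (x * y) / t)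

/-!
The substitution `x = ξ²` turns the operator `x ∂ₓ² + ½ ∂ₓ` into `¼ ∂_ξ²`. In the variable
`ξ = √x` the diffusion kernel is, up to the factor `1 / (2√y)`, the sum of the Gaussian heat kernels
of diffusivity `¼` centred at `√y` and `-√y`: expand `cosh` and complete the squares
`x + y ∓ 2√(xy) = (√x ∓ √y)²`. The claim is therefore the heat equation for these two Gaussians.
-/

open Filter Topology

section SqrtSubstitution

variable {E : Type*} [NormedAddCommGroup E] [NormedSpace ℝ E] {f : ℝ → E} {x : ℝ}

theorem deriv_comp_sqrt (hx : x ≠ 0) (hf : DifferentiableAt ℝ f (√x)) :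
    deriv (fun z => f (√z)) x = (1 / (2 * √x)) • deriv f (√x) :=
  (hf.hasDerivAt.scomp x (hasDerivAt_sqrt hx)).deriv

theorem iteratedDeriv_two_comp_sqrt (hx : 0 < x)
    (hf : ∀ᶠ ξ in 𝓝 (√x), DifferentiableAt ℝ f ξ) (hf' : DifferentiableAt ℝ (deriv f) (√x)) :
    iteratedDeriv 2 (fun z => f (√z)) x =
      (1 / (4 * x)) • iteratedDeriv 2 f (√x) - (1 / (4 * x * √x)) • deriv f (√x) := by
  have hsqrt : √x ≠ 0 := (sqrt_pos.2 hx).ne'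
  have hderiv : deriv (fun z => f (√z)) =ᶠ[𝓝 x] fun z => (1 / (2 * √z)) • deriv f (√z) := by
    filter_upwards [eventually_ne_nhds hx.ne', continuous_sqrt.continuousAt.eventually hf]
      with z hz hfz using deriv_comp_sqrt hz hfz
  have hcoeff : HasDerivAt (fun z => 1 / (2 * √z)) (-(1 / (4 * x * √x))) x := by
    convert! (hasDerivAt_const x (1 : ℝ)).div ((hasDerivAt_sqrt hx.ne').const_mul 2)
      (mul_ne_zero two_ne_zero hsqrt) using 1
    field_simp
    linear_combination -4 * sq_sqrt hx.le
  have hcomp : HasDerivAt (fun z => deriv f (√z)) ((1 / (2 * √x)) • deriv (deriv f) (√x)) x :=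
    hf'.hasDerivAt.scomp x (hasDerivAt_sqrt hx.ne')
  have hsq : 1 / (2 * √x) * (1 / (2 * √x)) = 1 / (4 * x) := by
    rw [div_mul_div_comm, one_mul, mul_mul_mul_comm, mul_self_sqrt hx.le]
    norm_num
  simp only [iteratedDeriv_succ, iteratedDeriv_zero]
  rw [hderiv.deriv_eq, (hcoeff.fun_smul hcomp).deriv, smul_smul, hsq, neg_smul, ← sub_eq_add_neg]

theorem smul_iteratedDeriv_two_add_half_smul_deriv_comp_sqrt (hx : 0 < x)
    (hf : ∀ᶠ ξ in 𝓝 (√x), DifferentiableAt ℝ f ξ) (hf' : DifferentiableAt ℝ (deriv f) (√x)) :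
    x • iteratedDeriv 2 (fun z => f (√z)) x + (1 / 2 : ℝ) • deriv (fun z => f (√z)) x =
      (1 / 4 : ℝ) • iteratedDeriv 2 f (√x) := by
  have hsqrt : √x ≠ 0 := (sqrt_pos.2 hx).ne'
  rw [iteratedDeriv_two_comp_sqrt hx hf hf', deriv_comp_sqrt hx.ne' hf.self_of_nhds]
  match_scalars
  · field_simp
  · field_simp
    ring

end SqrtSubstitution

/-- The Gaussian kernel on the line: the fundamental solution, with source at the origin, of the
heat equation `u_t = κ u_ξξ` of diffusivity `κ`. -/
noncomputable def heatKernel (κ t ξ : ℝ) : ℝ :=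
  (√(4 * π * κ * t))⁻¹ * exp (-ξ ^ 2 / (4 * κ * t))

@[fun_prop]
theorem contDiff_heatKernel (κ t : ℝ) {n : WithTop ℕ∞} : ContDiff ℝ n (heatKernel κ t) := by
  unfold heatKernel
  fun_prop

theorem deriv_heatKernel (κ t : ℝ) :
    deriv (heatKernel κ t) = fun ξ => -ξ / (2 * κ * t) * heatKernel κ t ξ := by
  funext ξ
  have hexponent : HasDerivAt (fun ξ : ℝ => -ξ ^ 2 / (4 * κ * t)) (-ξ / (2 * κ * t)) ξ := by
    convert! (hasDerivAt_pow 2 ξ).neg.div_const (4 * κ * t) using 1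
    ring
  refine (hexponent.exp.const_mul (√(4 * π * κ * t))⁻¹).deriv.trans ?_
  rw [heatKernel]
  ring

theorem iteratedDeriv_two_heatKernel (κ t ξ : ℝ) :
    iteratedDeriv 2 (heatKernel κ t) ξ =
      ((ξ / (2 * κ * t)) ^ 2 - 1 / (2 * κ * t)) * heatKernel κ t ξ := by
  have hslope : HasDerivAt (fun ξ : ℝ => -ξ / (2 * κ * t)) (-1 / (2 * κ * t)) ξ :=
    (hasDerivAt_id ξ).neg.div_const _
  have hkernel : HasDerivAt (heatKernel κ t) (-ξ / (2 * κ * t) * heatKernel κ t ξ) ξ := by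
    simpa only [deriv_heatKernel] using
      ((contDiff_heatKernel κ t).differentiable one_ne_zero ξ).hasDerivAt
  rw [iteratedDeriv_succ, iteratedDeriv_one, deriv_heatKernel]
  refine (hslope.mul hkernel).deriv.trans ?_
  ring

theorem hasDerivAt_heatKernel_time {κ t : ℝ} (hκ : 0 < κ) (ht : 0 < t) (ξ : ℝ) :
    HasDerivAt (fun s => heatKernel κ s ξ)
      ((ξ ^ 2 / (4 * κ * t ^ 2) - 1 / (2 * t)) * heatKernel κ t ξ) t := by
  have hpos : 0 < 4 * π * κ * t := by positivity
  have hsqrt : √(4 * π * κ * t) ≠ 0 := (sqrt_pos.2 hpos).ne'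
  have hnormalization : HasDerivAt (fun s => (√(4 * π * κ * s))⁻¹)
      (-1 / (2 * t) * (√(4 * π * κ * t))⁻¹) t := by
    convert! (((hasDerivAt_id t).const_mul (4 * π * κ)).sqrt hpos.ne').inv hsqrt using 1
    simp only [id_eq, sq_sqrt hpos.le]
    field_simp
  have hexponent : HasDerivAt (fun s => -ξ ^ 2 / (4 * κ * s)) (ξ ^ 2 / (4 * κ * t ^ 2)) t := by
    convert! (hasDerivAt_const t (-ξ ^ 2)).div ((hasDerivAt_id t).const_mul (4 * κ))
      (by simp only [id_eq]; positivity) using 1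
    simp only [id_eq]
    field_simp
    ring
  convert! hnormalization.mul hexponent.exp using 1
  rw [heatKernel]
  ring

theorem heatKernel_satisfies_heat_equation {κ t : ℝ} (hκ : 0 < κ) (ht : 0 < t) (ξ : ℝ) :
    HasDerivAt (fun s => heatKernel κ s ξ) (κ * iteratedDeriv 2 (heatKernel κ t) ξ) t := by
  convert! hasDerivAt_heatKernel_time hκ ht ξ using 1
  rw [iteratedDeriv_two_heatKernel]
  field_simp
  ring

/-- The sum of the heat kernels of diffusivity `κ` centred at `η` and at its mirror image `-η`. On
the half-line `ξ > 0` this is the heat kernel with Neumann boundary condition at `0`. -/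
noncomputable def neumannHeatKernel (κ t η ξ : ℝ) : ℝ :=
  heatKernel κ t (ξ - η) + heatKernel κ t (ξ + η)

theorem contDiff_neumannHeatKernel (κ t η : ℝ) {n : WithTop ℕ∞} :
    ContDiff ℝ n (neumannHeatKernel κ t η) := by
  unfold neumannHeatKernel
  fun_prop

theorem iteratedDeriv_neumannHeatKernel (n : ℕ) (κ t η ξ : ℝ) :
    iteratedDeriv n (neumannHeatKernel κ t η) ξ =
      iteratedDeriv n (heatKernel κ t) (ξ - η) + iteratedDeriv n (heatKernel κ t) (ξ + η) := by
  unfold neumannHeatKernel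
  rw [iteratedDeriv_fun_add (by fun_prop) (by fun_prop), iteratedDeriv_comp_sub_const,
    iteratedDeriv_comp_add_const]

theorem neumannHeatKernel_satisfies_heat_equation {κ t : ℝ} (hκ : 0 < κ) (ht : 0 < t) (η ξ : ℝ) :
    deriv (fun s => neumannHeatKernel κ s η ξ) t =
      κ * iteratedDeriv 2 (neumannHeatKernel κ t η) ξ := by
  rw [iteratedDeriv_neumannHeatKernel, mul_add]
  exact ((heatKernel_satisfies_heat_equation hκ ht _).add
    (heatKernel_satisfies_heat_equation hκ ht _)).deriv

theorem exp_mul_cosh_eq_add_exp_sq {x y : ℝ} (hx : 0 ≤ x) (hy : 0 ≤ y) (t : ℝ) :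
    exp (-(x + y) / t) * cosh (2 * √(x * y) / t) =
      (exp (-(√x - √y) ^ 2 / t) + exp (-(√x + √y) ^ 2 / t)) / 2 := by
  have hsub : -(√x - √y) ^ 2 / t = -(x + y) / t + 2 * √(x * y) / t := by
    rw [sqrt_mul hx, sub_sq, sq_sqrt hx, sq_sqrt hy]
    ring
  have hadd : -(√x + √y) ^ 2 / t = -(x + y) / t + -(2 * √(x * y) / t) := by
    rw [sqrt_mul hx, add_sq, sq_sqrt hx, sq_sqrt hy]
    ring
  rw [hsub, hadd, exp_add, exp_add, cosh_eq]
  ring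

theorem diffusionKernel_eq_neumannHeatKernel {t x y : ℝ} (ht : 0 ≤ t) (hx : 0 ≤ x) (hy : 0 ≤ y) :
    diffusionKernel t x y = (2 * √y)⁻¹ * neumannHeatKernel (1 / 4) t (√y) (√x) := by
  have hnormalization : (π * t * y) ^ (-(1 : ℝ) / 2) = (√(π * t))⁻¹ * (√y)⁻¹ := by
    rw [rpow_div_two_eq_sqrt _ (by positivity), rpow_neg_one, sqrt_mul (by positivity), mul_inv]
  have hscale : 4 * (1 / 4) * t = t := by ring
  have hprefactor : 4 * π * (1 / 4) * t = π * t := by ring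
  rw [diffusionKernel, mul_assoc, hnormalization, exp_mul_cosh_eq_add_exp_sq hx hy,
    neumannHeatKernel, heatKernel, heatKernel, hscale, hprefactor]
  ring

/-- For every `t > 0` and `x, y > 0`, the diffusion kernel satisfies the spatially varying
diffusion equation `∂K/∂t = x·∂²K/∂x² + (1/2)·∂K/∂x`. -/
theorem diffusionKernel_satisfies_diffusion_equation (t x y : ℝ) (ht : 0 < t) (hx : 0 < x)
    (hy : 0 < y) :
    deriv (fun s => diffusionKernel s x y) t =
      x * iteratedDeriv 2 (fun z => diffusionKernel t z y) x +
        (1 / 2) * deriv (fun z => diffusionKernel t z y) x := by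
  have htime : (fun s => diffusionKernel s x y) =ᶠ[𝓝 t]
      fun s => (2 * √y)⁻¹ * neumannHeatKernel (1 / 4) s (√y) (√x) := by
    filter_upwards [lt_mem_nhds ht] with s hs
      using diffusionKernel_eq_neumannHeatKernel hs.le hx.le hy.le
  have hspace : (fun z => diffusionKernel t z y) =ᶠ[𝓝 x]
      fun z => (2 * √y)⁻¹ * neumannHeatKernel (1 / 4) t (√y) (√z) := by
    filter_upwards [lt_mem_nhds hx] with z hz
      using diffusionKernel_eq_neumannHeatKernel ht.le hz.le hy.le
  have hsubst := smul_iteratedDeriv_two_add_half_smul_deriv_comp_sqrt hx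
    (.of_forall ((contDiff_neumannHeatKernel (1 / 4) t (√y)).differentiable one_ne_zero))
    ((contDiff_neumannHeatKernel (1 / 4) t (√y)).differentiable_deriv_two (√x))
  simp only [smul_eq_mul] at hsubst
  rw [htime.deriv_eq, hspace.deriv_eq, hspace.iteratedDeriv_eq, deriv_const_mul_field,
    deriv_const_mul_field, iteratedDeriv_const_mul_field,
    neumannHeatKernel_satisfies_heat_equation (by norm_num) ht, ← hsubst]
  ring
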